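/- Let (G,x,y) encode a reflexive regular map that is simple, satisfies 2q² > |G| (density exceeding 1/2), and has p = 3. If J < q, then no neighbour of a vertex v lies in V_v, q is even, and 3q² ≤ 2|G| (the density is at most 2/3). If J = q, then q is odd. -/

import Mathlib

namespace RegularMap

variable {G : Type*} [Group G]

/-- The vertex set of the map: left cosets of the cyclic subgroup generated by `y`. -/
abbrev Vertex (y : G) : Type _ := G ⧸ Subgroup.zpowers y

/-- The rotation about the vertex `v = g⟨y⟩`, namely `g * y * g⁻¹`. -/
def rot (y : G) (v : Vertex y) : G :=
  Quotient.liftOn' v (fun g => g * y * g⁻¹) (by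
    intro a b h
    obtain ⟨k, hk⟩ := QuotientGroup.leftRel_apply.mp h
    have hk' : y ^ k = a⁻¹ * b := hk
    have hb : b = a * y ^ k := by rw [hk']; group
    subst hb
    group)

/-- Two vertices are adjacent iff they are distinct and form the endpoint pair of
some edge `g⟨x*y⟩`, whose endpoints are `g⟨y⟩` and `g*x*y⟨y⟩`. -/
def Adj (x y : G) (v w : Vertex y) : Prop :=
  v ≠ w ∧ ∃ g : G,
    ({v, w} : Set (Vertex y)) = {QuotientGroup.mk g, QuotientGroup.mk (g * x * y)}

/-- The map is simple: no edge has equal endpoints, and distinct edges (left cosets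
of `⟨x*y⟩`) have distinct endpoint pairs. -/
def IsSimple (x y : G) : Prop :=
  (∀ g : G, (QuotientGroup.mk g : Vertex y) ≠ QuotientGroup.mk (g * x * y)) ∧
  ∀ g h : G,
    ({QuotientGroup.mk g, QuotientGroup.mk (g * x * y)} : Set (Vertex y)) =
      {QuotientGroup.mk h, QuotientGroup.mk (h * x * y)} →
    (QuotientGroup.mk g : G ⧸ Subgroup.zpowers (x * y)) = QuotientGroup.mk h

/-- The map is reflexive: some group automorphism inverts both `x` and `y`. -/
def IsReflexive (x y : G) : Prop :=
  ∃ σ : G ≃* G, σ x = x⁻¹ ∧ σ y = y⁻¹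

/-- An automorphism of the map (given a reflection σ): either orientation preserving,
`g⟨y⟩ ↦ a*g⟨y⟩`, or orientation reversing, `g⟨y⟩ ↦ a*σ(g)⟨y⟩`. -/
def IsMapAut (y : G) (σ : G ≃* G) (φ : Vertex y → Vertex y) : Prop :=
  (∃ a : G, ∀ g : G, φ (QuotientGroup.mk g) = QuotientGroup.mk (a * g)) ∨
  (∃ a : G, ∀ g : G, φ (QuotientGroup.mk g) = QuotientGroup.mk (a * σ g))

/-- `v'` is a diagonal neighbour of `v`: `v' = S_w² • v` for some vertex `w` adjacent to `v`. -/
def DiagNeighbor (x y : G) (v v' : Vertex y) : Prop :=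
  ∃ w : Vertex y, Adj x y v w ∧ v' = rot y w ^ 2 • v

/-- Diagonal alignment: the reflexive-transitive closure of the diagonal-neighbour relation. -/
def Aligned (x y : G) : Vertex y → Vertex y → Prop :=
  Relation.ReflTransGen (DiagNeighbor x y)

/-- The primitive period `J`: the least `j ≥ 1` such that `S_v^j` fixes every vertex
diagonally aligned with `v` (this is independent of `v`). -/
noncomputable def primPeriod (x y : G) : ℕ :=
  sInf {j : ℕ | 1 ≤ j ∧ ∀ v v' : Vertex y, Aligned x y v v' → rot y v ^ j • v' = v'}

/-- The even period `T = lcm(J, 2)`. -/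
noncomputable def evenPeriod (x y : G) : ℕ := Nat.lcm (primPeriod x y) 2

/-- Relators of the tetrahedral group ⟨X,Y ∣ X³, Y³, (XY)²⟩. -/
def tetRels : Set (FreeGroup (Fin 2)) :=
  {FreeGroup.of 0 ^ 3, FreeGroup.of 1 ^ 3, (FreeGroup.of 0 * FreeGroup.of 1) ^ 2}

/-- Relators of the Fermat group ⟨X,Y ∣ X³, Y^(2n), (XY)², [X,Y]³⟩. -/
def fermatRels (n : ℕ) : Set (FreeGroup (Fin 2)) :=
  {FreeGroup.of 0 ^ 3, FreeGroup.of 1 ^ (2 * n), (FreeGroup.of 0 * FreeGroup.of 1) ^ 2,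
    (FreeGroup.of 0 * FreeGroup.of 1 * (FreeGroup.of 0)⁻¹ * (FreeGroup.of 1)⁻¹) ^ 3}

/-- `(G,x,y)` is the tetrahedral map: the canonical homomorphism from the presented
group ⟨X,Y ∣ X³, Y³, (XY)²⟩ sending X to x and Y to y is an isomorphism. -/
def IsTet (G : Type*) [Group G] (x y : G) : Prop :=
  ∃ e : PresentedGroup tetRels ≃* G,
    e (PresentedGroup.of 0) = x ∧ e (PresentedGroup.of 1) = y

/-- `(G,x,y)` is the Fermat map `Fer(n)`: the canonical homomorphism from the Fermat
group `G_n` sending X to x and Y to y is an isomorphism. -/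
def IsFermat (n : ℕ) (G : Type*) [Group G] (x y : G) : Prop :=
  ∃ e : PresentedGroup (fermatRels n) ≃* G,
    e (PresentedGroup.of 0) = x ∧ e (PresentedGroup.of 1) = y


/-!
Let `K = ⟨x, y⟩` and `Y = ⟨y⟩`. The half-turn `e` about the edge opposite to the vertex `Y` in a
triangle carries `Y` to a diagonal neighbour, so `H = ⟨y, e⟩` is the stabilizer of the alignment
class of `Y`. Simplicity implies `Y ∩ xYx⁻¹ = 1`, so `YxY` has `q²` elements.

If `J < q`, a neighbour of `Y` in its class would be fixed by `y ^ J ≠ 1`, against simplicity; hence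
`x ∉ H`. For odd `q`, `xYx⁻¹` is generated by `x y² x⁻¹ = y⁻¹ e ∈ H`, and so `x = y (x y x⁻¹) ∈ H`;
thus `q` is even. Finally `H ∪ xH ∪ x⁻¹H = K` while `YxY` misses `H`, so `q² ≤ |K| - |H| ≤ 2|K|/3`.

If `J = q`, then `Y ∩ eYe⁻¹`, which is normalized by both `y` and `e`, acts trivially on the class
and hence is trivial. So `YeY` also has `q²` elements, and by the density it equals `YxY`. Applying
the reflection, which fixes `e`, to `e = y ^ k x y ^ m` gives `y ^ (2k - 1) ∈ xYx⁻¹`, so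
`y ^ (2k - 1) = 1` and `q` is odd.
-/

section GroupTheory

open scoped Pointwise

lemma mem_conj_smul_iff {H : Subgroup G} {a b : G} :
    b ∈ MulAut.conj a • H ↔ a⁻¹ * b * a ∈ H := by
  rw [Subgroup.mem_pointwise_smul_iff_inv_smul_mem, ← map_inv, MulAut.smul_def,
    MulAut.conj_apply, inv_inv]

lemma ncard_doubleCoset_of_disjoint {H K : Subgroup G} {a : G}
    (h : Disjoint H (MulAut.conj a • K)) :
    (DoubleCoset.doubleCoset a (H : Set G) K).ncard = Nat.card H * Nat.card K := by
  have hrange : DoubleCoset.doubleCoset a (H : Set G) K =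
      Set.range fun p : H × K ↦ (p.1 : G) * a * p.2 := by
    ext b
    simp [DoubleCoset.mem_doubleCoset, eq_comm]
  have hinj : Function.Injective fun p : H × K ↦ (p.1 : G) * a * p.2 := by
    rintro ⟨b, c⟩ ⟨b', c'⟩ (heq : (b : G) * a * c = b' * a * c')
    have hconj : a⁻¹ * ((b' : G)⁻¹ * b) * a = c' * (c : G)⁻¹ := by
      rw [eq_mul_inv_iff_mul_eq]
      simp only [mul_assoc] at heq ⊢
      rw [heq]
      group
    have hb : (b' : G)⁻¹ * b = 1 :=
      Subgroup.disjoint_def.mp h (mul_mem (inv_mem b'.2) b.2)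
        (mem_conj_smul_iff.mpr (hconj ▸ mul_mem c'.2 (inv_mem c.2)))
    obtain rfl : b = b' := Subtype.ext (inv_mul_eq_one.mp hb).symm
    obtain rfl : c = c' := Subtype.ext (mul_left_cancel heq)
    rfl
  rw [hrange, ← Nat.card_coe_set_eq, Nat.card_range_of_injective hinj, Nat.card_prod]

lemma doubleCoset_subset {H K L : Subgroup G} {a : G} (hH : H ≤ L) (hK : K ≤ L) (ha : a ∈ L) :
    DoubleCoset.doubleCoset a (H : Set G) K ⊆ L := by
  intro d hd
  obtain ⟨b, hb, c, hc, rfl⟩ := DoubleCoset.mem_doubleCoset.mp hd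
  exact mul_mem (mul_mem (hH hb) ha) (hK hc)

lemma mem_doubleCoset_of_card_lt {H K : Subgroup G} [Finite K] (hHK : H ≤ K) {a b : G}
    (ha : a ∈ K) (hb : b ∈ K) (hHa : Disjoint H (MulAut.conj a • H))
    (hHb : Disjoint H (MulAut.conj b • H)) (hcard : Nat.card K < 2 * Nat.card H ^ 2) :
    b ∈ DoubleCoset.doubleCoset a (H : Set G) H := by
  refine DoubleCoset.mem_doubleCoset_of_not_disjoint fun hdisj ↦ hcard.not_ge ?_
  have hfin : (K : Set G).Finite := Set.toFinite _
  have haK := doubleCoset_subset hHK hHK ha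
  have hbK := doubleCoset_subset hHK hHK hb
  calc 2 * Nat.card H ^ 2
      = (DoubleCoset.doubleCoset a (H : Set G) H ∪ DoubleCoset.doubleCoset b H H).ncard := by
        rw [Set.ncard_union_eq hdisj (hfin.subset haK) (hfin.subset hbK),
          ncard_doubleCoset_of_disjoint hHa, ncard_doubleCoset_of_disjoint hHb, two_mul, pow_two]
    _ ≤ Nat.card K := Set.ncard_le_ncard (Set.union_subset haK hbK) hfin

lemma mem_normalizer_inf_conj_smul (H : Subgroup G) {a : G} (ha : a ^ 2 = 1) :
    a ∈ Subgroup.normalizer (H ⊓ MulAut.conj a • H : Subgroup G) := by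
  have hinv : a⁻¹ = a := inv_eq_of_mul_eq_one_left (by rwa [← pow_two])
  rw [Subgroup.mem_normalizer_iff]
  intro b
  have hcancel : a * (a * b * a) * a = b := by
    calc a * (a * b * a) * a = a ^ 2 * b * a ^ 2 := by simp only [pow_two, mul_assoc]
      _ = b := by rw [ha, one_mul, mul_one]
  simp only [Subgroup.mem_inf, mem_conj_smul_iff, hinv, hcancel]
  exact and_comm

lemma eq_one_or_eq_of_mem_zpowers {a b : G} (ha : a ^ 2 = 1) (hb : b ∈ Subgroup.zpowers a) :
    b = 1 ∨ b = a := by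
  obtain ⟨m, rfl⟩ := hb
  obtain ⟨n, rfl | rfl⟩ := m.even_or_odd'
  all_goals simp [zpow_add, zpow_mul, ha]

lemma relIndex_closure_le_ncard {H : Subgroup G} {s : Set G} {S : Set (G ⧸ H)} (hS : S.Finite)
    (hone : QuotientGroup.mk 1 ∈ S) (hs : ∀ g ∈ s, g • S = S) :
    H.relIndex (Subgroup.closure s) ≤ S.ncard := by
  set K := Subgroup.closure s
  have hK : K ≤ MulAction.stabilizer G S := (Subgroup.closure_le _).mpr hs
  have horbit : MulAction.orbit K (QuotientGroup.mk 1 : G ⧸ H) ⊆ S := by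
    rintro _ ⟨g, rfl⟩
    have hg : (g : G) • S = S := hK g.2
    rw [← hg]
    exact Set.smul_mem_smul_set hone
  have hstab : H.subgroupOf K = MulAction.stabilizer K (QuotientGroup.mk 1 : G ⧸ H) := by
    ext g
    have hsmul : g • (QuotientGroup.mk 1 : G ⧸ H) = QuotientGroup.mk (g : G) :=
      congrArg QuotientGroup.mk (mul_one (g : G))
    rw [Subgroup.mem_subgroupOf, MulAction.mem_stabilizer_iff, hsmul, eq_comm, QuotientGroup.eq,
      inv_one, one_mul]
  rw [Subgroup.relIndex, hstab, MulAction.index_stabilizer]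
  exact Set.ncard_le_ncard horbit hS

end GroupTheory

section Relations

open scoped Pointwise

variable {x y : G}

lemma inv_mul_inv_eq_mul (hxy : (x * y) ^ 2 = 1) : y⁻¹ * x⁻¹ = x * y := by
  rw [← mul_inv_rev, inv_eq_iff_mul_eq_one, ← pow_two, hxy]

lemma mul_mul_eq_inv (hxy : (x * y) ^ 2 = 1) : y * x * y = x⁻¹ := by
  rw [mul_assoc, ← inv_mul_inv_eq_mul hxy, mul_inv_cancel_left]

lemma mul_self_eq_inv (hx : x ^ 3 = 1) : x * x = x⁻¹ :=
  eq_inv_of_mul_eq_one_left (by rw [← pow_two, ← pow_succ, hx])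

lemma inv_mul_inv_self (hx : x ^ 3 = 1) : x⁻¹ * x⁻¹ = x := by
  rw [← mul_inv_rev, mul_self_eq_inv hx, inv_inv]

/-- The half-turn of the map about the edge opposite to the vertex `⟨y⟩` in the face rotated by
`x`. It interchanges `⟨y⟩` with a diagonal neighbour. -/
def oppositeHalfTurn (x y : G) : G := x * (x * y) * x⁻¹

lemma oppositeHalfTurn_sq (hxy : (x * y) ^ 2 = 1) : oppositeHalfTurn x y ^ 2 = 1 := by
  rw [oppositeHalfTurn, conj_pow, hxy, mul_one, mul_inv_cancel]

lemma inv_oppositeHalfTurn (hxy : (x * y) ^ 2 = 1) :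
    (oppositeHalfTurn x y)⁻¹ = oppositeHalfTurn x y := by
  rw [inv_eq_iff_mul_eq_one, ← pow_two, oppositeHalfTurn_sq hxy]

lemma inv_mul_oppositeHalfTurn (hxy : (x * y) ^ 2 = 1) (hx : x ^ 3 = 1) :
    y⁻¹ * oppositeHalfTurn x y = x * y ^ 2 * x⁻¹ := by
  calc y⁻¹ * (x * (x * y) * x⁻¹) = y⁻¹ * (x * x) * y * x⁻¹ := by simp only [mul_assoc]
    _ = y⁻¹ * (y * x * y) * y * x⁻¹ := by rw [mul_self_eq_inv hx, mul_mul_eq_inv hxy]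
    _ = x * y ^ 2 * x⁻¹ := by simp only [pow_two, mul_assoc, inv_mul_cancel_left]

lemma mul_oppositeHalfTurn (hx : x ^ 3 = 1) : x * oppositeHalfTurn x y = y * x⁻¹ := by
  calc x * (x * (x * y) * x⁻¹) = x ^ 3 * y * x⁻¹ := by
        simp only [pow_succ, pow_zero, one_mul, mul_assoc]
    _ = y * x⁻¹ := by rw [hx, one_mul]

lemma map_oppositeHalfTurn (hxy : (x * y) ^ 2 = 1) (hx : x ^ 3 = 1) {σ : G ≃* G}
    (hσx : σ x = x⁻¹) (hσy : σ y = y⁻¹) : σ (oppositeHalfTurn x y) = oppositeHalfTurn x y := by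
  calc σ (oppositeHalfTurn x y) = x⁻¹ * x⁻¹ * y⁻¹ * x := by
        simp only [oppositeHalfTurn, map_mul, map_inv, hσx, hσy, inv_inv, mul_assoc]
    _ = x * y⁻¹ * (x⁻¹ * x⁻¹) := by rw [inv_mul_inv_self hx]
    _ = (oppositeHalfTurn x y)⁻¹ := by rw [oppositeHalfTurn]; group
    _ = oppositeHalfTurn x y := inv_oppositeHalfTurn hxy

/-- The stabilizer of the alignment class of the vertex `⟨y⟩`, by `aligned_mk_iff`. -/
def alignedSubgroup (x y : G) : Subgroup G := Subgroup.closure {y, oppositeHalfTurn x y}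

lemma mem_alignedSubgroup_right : y ∈ alignedSubgroup x y :=
  Subgroup.subset_closure (by simp)

lemma oppositeHalfTurn_mem_alignedSubgroup : oppositeHalfTurn x y ∈ alignedSubgroup x y :=
  Subgroup.subset_closure (by simp)

lemma zpowers_le_alignedSubgroup : Subgroup.zpowers y ≤ alignedSubgroup x y :=
  Subgroup.zpowers_le.mpr mem_alignedSubgroup_right

lemma alignedSubgroup_le_closure : alignedSubgroup x y ≤ Subgroup.closure {x, y} := by
  have hx : x ∈ Subgroup.closure {x, y} := Subgroup.subset_closure (by simp)
  have hy : y ∈ Subgroup.closure {x, y} := Subgroup.subset_closure (by simp)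
  refine (Subgroup.closure_le _).mpr ?_
  rintro _ (rfl | rfl)
  · exact hy
  · exact mul_mem (mul_mem hx (mul_mem hx hy)) (inv_mem hx)

lemma zpowers_le_closure : Subgroup.zpowers y ≤ Subgroup.closure {x, y} :=
  zpowers_le_alignedSubgroup.trans alignedSubgroup_le_closure

lemma mem_alignedSubgroup_left_of_odd (hxy : (x * y) ^ 2 = 1) (hx : x ^ 3 = 1)
    (hodd : Odd (orderOf y)) : x ∈ alignedSubgroup x y := by
  obtain ⟨n, hn⟩ := hodd
  have hy : (y ^ 2) ^ (n + 1) = y := by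
    rw [← pow_mul, show 2 * (n + 1) = orderOf y + 1 by lia, pow_succ, pow_orderOf_eq_one, one_mul]
  have hconj : x * y * x⁻¹ ∈ alignedSubgroup x y := by
    have := pow_mem (mul_mem (inv_mem mem_alignedSubgroup_right)
      (oppositeHalfTurn_mem_alignedSubgroup (x := x) (y := y))) (n + 1)
    rwa [inv_mul_oppositeHalfTurn hxy hx, conj_pow, hy] at this
  have hprod : y * (x * y * x⁻¹) = x := by
    rw [← mul_assoc, ← mul_assoc, mul_mul_eq_inv hxy, inv_mul_inv_self hx]
  simpa only [hprod] using mul_mem (mem_alignedSubgroup_right (x := x)) hconj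

lemma relIndex_alignedSubgroup_le (hxy : (x * y) ^ 2 = 1) (hx : x ^ 3 = 1) :
    (alignedSubgroup x y).relIndex (Subgroup.closure {x, y}) ≤ 3 := by
  set H := alignedSubgroup x y
  let S : Set (G ⧸ H) := {QuotientGroup.mk 1, QuotientGroup.mk x, QuotientGroup.mk x⁻¹}
  have hy : y ∈ H := mem_alignedSubgroup_right
  have hxS : x • S = S := by
    simp only [S, Set.smul_set_insert, Set.smul_set_singleton, MulAction.Quotient.smul_mk,
      smul_eq_mul, mul_one, mul_inv_cancel, mul_self_eq_inv hx]
    rw [Set.pair_comm, Set.insert_comm, Set.pair_comm, Set.insert_comm]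
  have hyS : y • S = S := by
    have hy1 : (QuotientGroup.mk y : G ⧸ H) = QuotientGroup.mk 1 := by
      simpa using QuotientGroup.mk_mul_of_mem (1 : G) hy
    have hyx : (QuotientGroup.mk (y * x) : G ⧸ H) = QuotientGroup.mk x⁻¹ := by
      rw [← QuotientGroup.mk_mul_of_mem (y * x) hy, mul_mul_eq_inv hxy]
    have hyx' : (QuotientGroup.mk (y * x⁻¹) : G ⧸ H) = QuotientGroup.mk x := by
      rw [← mul_oppositeHalfTurn hx,
        QuotientGroup.mk_mul_of_mem _ oppositeHalfTurn_mem_alignedSubgroup]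
    simp only [S, Set.smul_set_insert, Set.smul_set_singleton, MulAction.Quotient.smul_mk,
      smul_eq_mul, mul_one, hy1, hyx, hyx']
    rw [Set.pair_comm]
  calc H.relIndex (Subgroup.closure {x, y}) ≤ S.ncard :=
        relIndex_closure_le_ncard (Set.toFinite S) (Set.mem_insert _ _)
          (by rintro _ (rfl | rfl); exacts [hxS, hyS])
    _ ≤ 3 := by
        refine (Set.ncard_insert_le _ _).trans (Nat.succ_le_succ ?_)
        exact (Set.ncard_insert_le _ _).trans (by rw [Set.ncard_singleton])

end Relations

section Map

open scoped Pointwise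

variable {x y : G}

lemma rot_mk (y g : G) : rot y (QuotientGroup.mk g) = g * y * g⁻¹ := rfl

lemma rot_pow_orderOf (v : Vertex y) : rot y v ^ orderOf y = 1 := by
  induction v using QuotientGroup.induction_on with
  | H g => rw [rot_mk, conj_pow, pow_orderOf_eq_one, mul_one, mul_inv_cancel]

lemma rot_pow_smul_mk_eq_self_iff (n : ℕ) (g h : G) :
    rot y (QuotientGroup.mk g) ^ n • (QuotientGroup.mk h : Vertex y) = QuotientGroup.mk h ↔
      (g⁻¹ * h)⁻¹ * y ^ n * (g⁻¹ * h) ∈ Subgroup.zpowers y := by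
  rw [eq_comm, rot_mk, conj_pow, MulAction.Quotient.smul_mk, QuotientGroup.eq]
  simp only [smul_eq_mul, mul_inv_rev, inv_inv, mul_assoc]

lemma IsSimple.disjoint_conj_smul (hs : IsSimple x y) (hxy : (x * y) ^ 2 = 1) :
    Disjoint (Subgroup.zpowers y) (MulAut.conj x • Subgroup.zpowers y) := by
  refine Subgroup.disjoint_def.mpr fun {a} ha ha' ↦ ?_
  have hy := Subgroup.mem_zpowers y
  have hsrc : (QuotientGroup.mk 1 : Vertex y) = QuotientGroup.mk a := by
    simpa using (QuotientGroup.mk_mul_of_mem (1 : G) ha).symm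
  have htgt : (QuotientGroup.mk (1 * x * y) : Vertex y) = QuotientGroup.mk (a * x * y) := by
    rw [QuotientGroup.mk_mul_of_mem _ hy, QuotientGroup.mk_mul_of_mem _ hy, QuotientGroup.eq,
      one_mul, ← mul_assoc]
    exact mem_conj_smul_iff.mp ha'
  have hedge : a ∈ Subgroup.zpowers (x * y) := by
    simpa using QuotientGroup.eq.mp (hs.2 1 a (by rw [hsrc, htgt]))
  refine (eq_one_or_eq_of_mem_zpowers hxy hedge).resolve_right ?_
  rintro rfl
  exact hs.1 1 (by simpa using hsrc)

lemma adj_mk_iff (hxy : (x * y) ^ 2 = 1) (hs : IsSimple x y) {g : G} {w : Vertex y} :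
    Adj x y (QuotientGroup.mk g) w ↔ ∃ k : ℤ, w = QuotientGroup.mk (g * y ^ k * x) := by
  have hmk (a : G) : (QuotientGroup.mk (a * y) : Vertex y) = QuotientGroup.mk a :=
    QuotientGroup.mk_mul_of_mem a (Subgroup.mem_zpowers y)
  have hzpow {a b : G} (h : (QuotientGroup.mk a : Vertex y) = QuotientGroup.mk b) :
      ∃ k : ℤ, b = a * y ^ k := by
    obtain ⟨k, hk⟩ := Subgroup.mem_zpowers_iff.mp (QuotientGroup.eq.mp h)
    exact ⟨k, by rw [hk, mul_inv_cancel_left]⟩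
  constructor
  · rintro ⟨-, a, ha⟩
    rcases Set.pair_eq_pair_iff.mp ha with ⟨hg, rfl⟩ | ⟨hg, rfl⟩
    · obtain ⟨k, rfl⟩ := hzpow hg
      exact ⟨k, hmk _⟩
    · obtain ⟨k, hk⟩ := hzpow hg
      refine ⟨k, ?_⟩
      have hflip : g * y ^ k * x * y = a := by
        rw [← hk, mul_assoc _ x y, mul_assoc a x y, mul_assoc, ← pow_two, hxy, mul_one]
      rw [← hflip, hmk]
  · rintro ⟨k, rfl⟩
    have hg : (QuotientGroup.mk (g * y ^ k) : Vertex y) = QuotientGroup.mk g :=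
      QuotientGroup.mk_mul_of_mem g (Subgroup.zpow_mem_zpowers y k)
    have hne := hs.1 (g * y ^ k)
    rw [hmk, hg] at hne
    exact ⟨hne, g * y ^ k, by rw [hmk, hg]⟩

lemma diagNeighbor_mk_iff (hxy : (x * y) ^ 2 = 1) (hx : x ^ 3 = 1) (hs : IsSimple x y)
    {g : G} {v : Vertex y} :
    DiagNeighbor x y (QuotientGroup.mk g) v ↔
      ∃ k : ℤ, v = QuotientGroup.mk (g * y ^ k * oppositeHalfTurn x y) := by
  have hrot (k : ℤ) :
      rot y (QuotientGroup.mk (g * y ^ k * x)) ^ 2 • (QuotientGroup.mk g : Vertex y) =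
        QuotientGroup.mk (g * y ^ (k - 1) * oppositeHalfTurn x y) := by
    have hconj : (g * y ^ k * x * y * (g * y ^ k * x)⁻¹) ^ 2 * g =
        g * y ^ k * (x * y ^ 2 * x⁻¹) * y ^ (-k) := by
      rw [conj_pow]
      group
    rw [rot_mk, MulAction.Quotient.smul_mk, smul_eq_mul, hconj,
      QuotientGroup.mk_mul_of_mem _ (Subgroup.zpow_mem_zpowers y _),
      ← inv_mul_oppositeHalfTurn hxy hx, zpow_sub_one]
    simp only [mul_assoc]
  constructor
  · rintro ⟨w, hw, rfl⟩
    obtain ⟨k, rfl⟩ := (adj_mk_iff hxy hs).mp hw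
    exact ⟨k - 1, hrot k⟩
  · rintro ⟨k, rfl⟩
    refine ⟨_, (adj_mk_iff hxy hs).mpr ⟨k + 1, rfl⟩, ?_⟩
    rw [hrot, add_sub_cancel_right]

lemma Aligned.exists_mk_mul (hxy : (x * y) ^ 2 = 1) (hx : x ^ 3 = 1) (hs : IsSimple x y) {g : G}
    {v : Vertex y} (h : Aligned x y (QuotientGroup.mk g) v) :
    ∃ a ∈ alignedSubgroup x y, v = QuotientGroup.mk (g * a) := by
  induction h with
  | refl => exact ⟨1, one_mem _, by rw [mul_one]⟩
  | tail _ hstep ih =>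
    obtain ⟨a, ha, rfl⟩ := ih
    obtain ⟨k, rfl⟩ := (diagNeighbor_mk_iff hxy hx hs).mp hstep
    refine ⟨a * y ^ k * oppositeHalfTurn x y, ?_, by simp only [mul_assoc]⟩
    exact mul_mem (mul_mem ha (zpow_mem mem_alignedSubgroup_right k))
      oppositeHalfTurn_mem_alignedSubgroup

lemma aligned_mk_mul (hxy : (x * y) ^ 2 = 1) (hx : x ^ 3 = 1) (hs : IsSimple x y) (g : G) {a : G}
    (ha : a ∈ alignedSubgroup x y) :
    Aligned x y (QuotientGroup.mk g) (QuotientGroup.mk (g * a)) := by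
  have hy := Subgroup.mem_zpowers y
  have hstep (b : G) : DiagNeighbor x y (QuotientGroup.mk b)
      (QuotientGroup.mk (b * oppositeHalfTurn x y)) :=
    (diagNeighbor_mk_iff hxy hx hs).mpr ⟨0, by rw [zpow_zero, mul_one]⟩
  induction ha using Subgroup.closure_induction_right with
  | one => rw [mul_one]; exact .refl
  | mul_right b _ c hc ih =>
    rw [← mul_assoc]
    rcases hc with rfl | rfl
    · rwa [QuotientGroup.mk_mul_of_mem _ hy]
    · exact ih.tail (hstep _)
  | mul_inv_cancel b _ c hc ih =>
    rw [← mul_assoc]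
    rcases hc with rfl | rfl
    · rwa [QuotientGroup.mk_mul_of_mem _ (inv_mem hy)]
    · rw [inv_oppositeHalfTurn hxy]
      exact ih.tail (hstep _)

lemma aligned_mk_iff (hxy : (x * y) ^ 2 = 1) (hx : x ^ 3 = 1) (hs : IsSimple x y) {g h : G} :
    Aligned x y (QuotientGroup.mk g) (QuotientGroup.mk h) ↔ g⁻¹ * h ∈ alignedSubgroup x y := by
  refine ⟨fun hal ↦ ?_, fun hmem ↦ ?_⟩
  · obtain ⟨a, ha, hga⟩ := hal.exists_mk_mul hxy hx hs
    have hmem := mul_mem ha (inv_mem (zpowers_le_alignedSubgroup (QuotientGroup.eq.mp hga)))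
    convert hmem using 1
    group
  · simpa using aligned_mk_mul hxy hx hs g hmem

lemma primPeriod_spec (hy : IsOfFinOrder y) :
    1 ≤ primPeriod x y ∧
      ∀ v v' : Vertex y, Aligned x y v v' → rot y v ^ primPeriod x y • v' = v' := by
  refine Nat.sInf_mem (s := {j | 1 ≤ j ∧ ∀ v v' : Vertex y, Aligned x y v v' → _}) ?_
  exact ⟨orderOf y, hy.orderOf_pos, fun v v' _ ↦ by rw [rot_pow_orderOf, one_smul]⟩

lemma not_aligned_of_adj (hxy : (x * y) ^ 2 = 1) (hs : IsSimple x y)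
    (hJ : primPeriod x y < orderOf y) {v w : Vertex y} (hvw : Adj x y v w) :
    ¬ Aligned x y v w := by
  intro hal
  obtain ⟨hpos, hfix⟩ := primPeriod_spec (x := x) (orderOf_pos_iff.mp (Nat.zero_lt_of_lt hJ))
  induction v using QuotientGroup.induction_on with
  | H g =>
    obtain ⟨k, rfl⟩ := (adj_mk_iff hxy hs).mp hvw
    have hmem := (rot_pow_smul_mk_eq_self_iff _ _ _).mp (hfix _ _ hal)
    have hconj : (g⁻¹ * (g * y ^ k * x))⁻¹ * y ^ primPeriod x y * (g⁻¹ * (g * y ^ k * x)) =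
        x⁻¹ * y ^ primPeriod x y * x := by group
    have hone : y ^ primPeriod x y = 1 :=
      Subgroup.disjoint_def.mp (hs.disjoint_conj_smul hxy) (Subgroup.npow_mem_zpowers y _)
        (mem_conj_smul_iff.mpr (hconj ▸ hmem))
    exact (Nat.le_of_dvd hpos (orderOf_dvd_of_pow_eq_one hone)).not_gt hJ

lemma notMem_alignedSubgroup_left (hxy : (x * y) ^ 2 = 1) (hx : x ^ 3 = 1) (hs : IsSimple x y)
    (hJ : primPeriod x y < orderOf y) : x ∉ alignedSubgroup x y := by
  intro hmem
  exact not_aligned_of_adj (v := QuotientGroup.mk 1) (w := QuotientGroup.mk x) hxy hs hJ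
    ((adj_mk_iff hxy hs).mpr ⟨0, by simp⟩) ((aligned_mk_iff hxy hx hs).mpr (by simpa))

lemma even_orderOf_of_primPeriod_lt (hxy : (x * y) ^ 2 = 1) (hx : x ^ 3 = 1) (hs : IsSimple x y)
    (hJ : primPeriod x y < orderOf y) : Even (orderOf y) :=
  Nat.not_odd_iff_even.mp fun hodd ↦
    notMem_alignedSubgroup_left hxy hx hs hJ (mem_alignedSubgroup_left_of_odd hxy hx hodd)

lemma three_mul_orderOf_sq_le [Finite (Subgroup.closure {x, y})] (hxy : (x * y) ^ 2 = 1)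
    (hx : x ^ 3 = 1) (hs : IsSimple x y) (hmem : x ∉ alignedSubgroup x y) :
    3 * orderOf y ^ 2 ≤ 2 * Nat.card (Subgroup.closure {x, y}) := by
  set H := alignedSubgroup x y
  set K := Subgroup.closure {x, y}
  let D := DoubleCoset.doubleCoset x (Subgroup.zpowers y : Set G) (Subgroup.zpowers y)
  have hDcard : D.ncard = orderOf y ^ 2 := by
    rw [ncard_doubleCoset_of_disjoint (hs.disjoint_conj_smul hxy), Nat.card_zpowers, pow_two]
  have hdisj : Disjoint D H := by
    refine Set.disjoint_left.mpr fun b hb hbH ↦ hmem ?_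
    obtain ⟨c, hc, d, hd, rfl⟩ := DoubleCoset.mem_doubleCoset.mp hb
    rwa [SetLike.mem_coe, H.mul_mem_cancel_right (zpowers_le_alignedSubgroup hd),
      H.mul_mem_cancel_left (zpowers_le_alignedSubgroup hc)] at hbH
  have hunion : D ∪ H ⊆ K :=
    Set.union_subset
      (doubleCoset_subset zpowers_le_closure zpowers_le_closure (Subgroup.subset_closure (by simp)))
      alignedSubgroup_le_closure
  have hfin : (K : Set G).Finite := Set.toFinite _
  have hadd : orderOf y ^ 2 + Nat.card H ≤ Nat.card K := by
    have := Set.ncard_le_ncard hunion hfin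
    rwa [Set.ncard_union_eq hdisj (hfin.subset (Set.subset_union_left.trans hunion))
      (hfin.subset (Set.subset_union_right.trans hunion)), hDcard] at this
  have hindex : Nat.card K ≤ 3 * Nat.card H := by
    have := Subgroup.relIndex_mul_relIndex ⊥ H K bot_le alignedSubgroup_le_closure
    rw [Subgroup.relIndex_bot_left, Subgroup.relIndex_bot_left, mul_comm] at this
    rw [← this]
    exact Nat.mul_le_mul_right _ (relIndex_alignedSubgroup_le hxy hx)
  lia

lemma odd_orderOf_of_mem_doubleCoset (hxy : (x * y) ^ 2 = 1) (hx : x ^ 3 = 1)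
    (hr : IsReflexive x y) (hs : IsSimple x y)
    (h : oppositeHalfTurn x y ∈
      DoubleCoset.doubleCoset x (Subgroup.zpowers y : Set G) (Subgroup.zpowers y)) :
    Odd (orderOf y) := by
  obtain ⟨σ, hσx, hσy⟩ := hr
  obtain ⟨_, ⟨k, rfl⟩, _, ⟨m, rfl⟩, he⟩ := DoubleCoset.mem_doubleCoset.mp h
  dsimp only at he
  have hσe : y ^ (-k) * x⁻¹ * y ^ (-m) = y ^ k * x * y ^ m := by
    calc y ^ (-k) * x⁻¹ * y ^ (-m) = σ (y ^ k * x * y ^ m) := by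
          simp only [map_mul, map_zpow, hσx, hσy, inv_zpow, zpow_neg]
      _ = y ^ k * x * y ^ m := by rw [← he, map_oppositeHalfTurn hxy hx hσx hσy]
  have hxk : x⁻¹ * y ^ (2 * k - 1) * x = y ^ (1 - 2 * m) := by
    have hinv : x⁻¹ = y ^ (2 * k) * x * y ^ (2 * m) := by
      calc x⁻¹ = y ^ k * (y ^ (-k) * x⁻¹ * y ^ (-m)) * y ^ m := by group
        _ = y ^ (2 * k) * x * y ^ (2 * m) := by rw [hσe]; group
    have hconj : y ^ (2 * k - 1) * x = x * y ^ (1 - 2 * m) := by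
      calc y ^ (2 * k - 1) * x = y⁻¹ * (y ^ (2 * k) * x * y ^ (2 * m)) * y ^ (-2 * m) := by group
        _ = y⁻¹ * (y * x * y) * y ^ (-2 * m) := by rw [← hinv, mul_mul_eq_inv hxy]
        _ = x * y ^ (1 - 2 * m) := by group
    rw [mul_assoc, hconj, inv_mul_cancel_left]
  have hone : y ^ (2 * k - 1) = 1 :=
    Subgroup.disjoint_def.mp (hs.disjoint_conj_smul hxy) (Subgroup.zpow_mem_zpowers y _)
      (mem_conj_smul_iff.mpr (hxk ▸ Subgroup.zpow_mem_zpowers y _))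
  have hdvd : (orderOf y : ℤ) ∣ 2 * k - 1 := orderOf_dvd_iff_zpow_eq_one.mpr hone
  exact (Int.natAbs_odd.mpr ⟨k - 1, by ring⟩).of_dvd_nat (Int.natCast_dvd.mp hdvd)

lemma alignedSubgroup_le_normalizer (hxy : (x * y) ^ 2 = 1) :
    alignedSubgroup x y ≤ Subgroup.normalizer (Subgroup.zpowers y ⊓
      MulAut.conj (oppositeHalfTurn x y) • Subgroup.zpowers y : Subgroup G) := by
  refine (Subgroup.closure_le _).mpr ?_
  rintro _ (rfl | rfl)
  · exact Subgroup.le_normalizer_of_normal_subgroupOf inf_le_left (Subgroup.mem_zpowers _)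
  · exact mem_normalizer_inf_conj_smul _ (oppositeHalfTurn_sq hxy)

lemma primPeriod_lt_of_not_disjoint (hxy : (x * y) ^ 2 = 1) (hx : x ^ 3 = 1) (hs : IsSimple x y)
    (hy : IsOfFinOrder y)
    (h : ¬ Disjoint (Subgroup.zpowers y)
      (MulAut.conj (oppositeHalfTurn x y) • Subgroup.zpowers y)) :
    primPeriod x y < orderOf y := by
  set N := Subgroup.zpowers y ⊓ MulAut.conj (oppositeHalfTurn x y) • Subgroup.zpowers y
  obtain ⟨z, hzN, hz⟩ := N.bot_or_exists_ne_one.resolve_left (disjoint_iff.not.mp h)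
  obtain ⟨j, hj, rfl⟩ : ∃ j < orderOf y, y ^ j = z := by
    classical
    simpa using hy.mem_zpowers_iff_mem_range_orderOf.mp hzN.1
  have hj₀ : 1 ≤ j := Nat.one_le_iff_ne_zero.mpr (by rintro rfl; exact hz (pow_zero y))
  refine lt_of_le_of_lt (Nat.sInf_le (And.intro hj₀ fun v v' hal ↦ ?_)) hj
  induction v using QuotientGroup.induction_on with
  | H g =>
    induction v' using QuotientGroup.induction_on with
    | H h =>
      have hnorm := alignedSubgroup_le_normalizer hxy ((aligned_mk_iff hxy hx hs).mp hal)
      exact (rot_pow_smul_mk_eq_self_iff j g h).mpr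
        ((Subgroup.mem_normalizer_iff''.mp hnorm _).mp hzN).1

lemma odd_orderOf_of_orderOf_le_primPeriod [Finite (Subgroup.closure {x, y})]
    (hxy : (x * y) ^ 2 = 1) (hx : x ^ 3 = 1) (hr : IsReflexive x y) (hs : IsSimple x y)
    (hden : Nat.card (Subgroup.closure {x, y}) < 2 * orderOf y ^ 2)
    (hJ : orderOf y ≤ primPeriod x y) : Odd (orderOf y) := by
  have hy : IsOfFinOrder y :=
    orderOf_pos_iff.mp (Nat.pos_of_ne_zero fun h ↦ by simp [h] at hden)
  have hdisj : Disjoint (Subgroup.zpowers y)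
      (MulAut.conj (oppositeHalfTurn x y) • Subgroup.zpowers y) := by
    by_contra h
    exact (primPeriod_lt_of_not_disjoint hxy hx hs hy h).not_ge hJ
  exact odd_orderOf_of_mem_doubleCoset hxy hx hr hs
    (mem_doubleCoset_of_card_lt zpowers_le_closure (Subgroup.subset_closure (by simp))
      (alignedSubgroup_le_closure oppositeHalfTurn_mem_alignedSubgroup)
      (hs.disjoint_conj_smul hxy) hdisj (by rwa [Nat.card_zpowers]))

end Map

theorem primPeriod_parity_general {x y : G} [Finite (Subgroup.closure {x, y})]
    (hxy : (x * y) ^ 2 = 1) (hsimple : IsSimple x y) (hx : x ^ 3 = 1) :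
    (primPeriod x y < orderOf y →
      (∀ v w : Vertex y, Adj x y v w → ¬ Aligned x y v w) ∧
      Even (orderOf y) ∧ 3 * orderOf y ^ 2 ≤ 2 * Nat.card (Subgroup.closure {x, y})) ∧
    (IsReflexive x y → 2 * orderOf y ^ 2 > Nat.card (Subgroup.closure {x, y}) →
      primPeriod x y = orderOf y → Odd (orderOf y)) := by
  refine ⟨fun hJ ↦ ⟨fun v w ↦ not_aligned_of_adj hxy hsimple hJ, ?_, ?_⟩, fun hrefl hden hJ ↦ ?_⟩
  · exact even_orderOf_of_primPeriod_lt hxy hx hsimple hJ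
  · exact three_mul_orderOf_sq_le hxy hx hsimple (notMem_alignedSubgroup_left hxy hx hsimple hJ)
  · exact odd_orderOf_of_orderOf_le_primPeriod hxy hx hrefl hsimple hden hJ.ge

/-- If `J < q` then no neighbour of a vertex lies in its alignment class, `q` is even
and the density is at most 2/3; if `J = q` then `q` is odd. -/
theorem primPeriod_parity
    (G : Type*) [Group G] [Finite G] (x y : G)
    (hgen : Subgroup.closure {x, y} = ⊤) (hxy : (x * y) ^ 2 = 1)
    (hrefl : IsReflexive x y) (hsimple : IsSimple x y)
    (hden : 2 * orderOf y ^ 2 > Nat.card G) (hp : orderOf x = 3) :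
    (primPeriod x y < orderOf y →
      (∀ v w : Vertex y, Adj x y v w → ¬ Aligned x y v w) ∧
      Even (orderOf y) ∧ 3 * orderOf y ^ 2 ≤ 2 * Nat.card G) ∧
    (primPeriod x y = orderOf y → Odd (orderOf y)) := by
  rw [← Subgroup.card_top (G := G), ← hgen] at hden ⊢
  exact (primPeriod_parity_general hxy hsimple (hp ▸ pow_orderOf_eq_one x)).imp_right
    fun hodd ↦ hodd hrefl hden

end RegularMap
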